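/- Let (μₙ) be positive reals with μₙ → 0 and √n·μₙ → ∞, and let (θₙ) satisfy θₙ/μₙ → ζ with |ζ| = 1 and √n(μₙ - ζθₙ) → r ∈ ℝ. Then Φ(√n(μₙ - θₙ)) - Φ(√n(-μₙ - θₙ)) → Φ(r) as n → ∞. -/

import Mathlib

open ProbabilityTheory Filter

/-- Standard normal cdf. -/
noncomputable def Phi (x : ℝ) : ℝ := cdf (gaussianReal 0 1) x

theorem Phi_continuous : Continuous Phi := by
  rw [continuous_iff_continuousAt]
  intro a
  have hm : Monotone (cdf (gaussianReal 0 1)) := monotone_cdf _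
  have key : ContinuousAt (cdf (gaussianReal 0 1)) a := by
    rw [hm.continuousAt_iff_leftLim_eq_rightLim, StieltjesFunction.rightLim_eq]
    have h := (cdf (gaussianReal 0 1)).measure_singleton a
    have : MeasureTheory.NullSingletonClass (gaussianReal 0 1) :=
      nullSingletonClass_gaussianReal one_ne_zero
    rw [measure_cdf, MeasureTheory.measure_singleton] at h
    have h2 := ENNReal.ofReal_eq_zero.1 h.symm
    exact le_antisymm (hm.leftLim_le le_rfl) (by linarith)
  exact key

theorem Phi_neg (x : ℝ) : 1 - Phi (-x) = Phi x := by
  have : MeasureTheory.NullSingletonClass (gaussianReal 0 1) :=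
    nullSingletonClass_gaussianReal one_ne_zero
  unfold Phi
  rw [cdf_eq_real, cdf_eq_real]
  have h1 : (gaussianReal 0 1).real (Set.Iic (-x)) = (gaussianReal 0 1).real (Set.Ici x) := by
    have h := gaussianReal_map_neg (μ := 0) (v := 1)
    rw [neg_zero] at h
    conv_lhs => rw [← h]
    rw [MeasureTheory.map_measureReal_apply measurable_neg measurableSet_Iic]
    congr 1
    ext y
    simp
  have h2 : (gaussianReal 0 1).real (Set.Iic x) = (gaussianReal 0 1).real (Set.Iio x) :=
    MeasureTheory.measureReal_congr MeasureTheory.Iio_ae_eq_Iic.symm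
  rw [h1, h2, ← Set.compl_Ici, MeasureTheory.probReal_compl_eq_one_sub measurableSet_Ici]

/-- consistent tuning, boundary case: if `μₙ → 0`, `√n μₙ → ∞`,
`θₙ/μₙ → ζ` with `|ζ| = 1`, and `√n(μₙ - ζ θₙ) → r ∈ ℝ`, then
`Φ(√n(μₙ-θₙ)) - Φ(√n(-μₙ-θₙ)) → Φ(r)`. -/
theorem stmt5 (μ θ : ℕ → ℝ) (ζ r : ℝ) (hζ : |ζ| = 1) (hμpos : ∀ n, 0 < μ n)
    (hμ0 : Tendsto μ atTop (nhds 0))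
    (hmuinf : Tendsto (fun n : ℕ => Real.sqrt n * μ n) atTop atTop)
    (hθζ : Tendsto (fun n : ℕ => θ n / μ n) atTop (nhds ζ))
    (hr : Tendsto (fun n : ℕ => Real.sqrt n * (μ n - ζ * θ n)) atTop (nhds r)) :
    Tendsto
      (fun n : ℕ =>
        Phi (Real.sqrt n * (μ n - θ n)) - Phi (Real.sqrt n * (-(μ n) - θ n)))
      atTop (nhds (Phi r)) := by
  have hc := Phi_continuous
  have hbot : Tendsto Phi atBot (nhds 0) := tendsto_cdf_atBot _
  have htop : Tendsto Phi atTop (nhds 1) := tendsto_cdf_atTop _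
  have h2 : Tendsto (fun n : ℕ => 2 * (Real.sqrt n * μ n)) atTop atTop :=
    hmuinf.const_mul_atTop two_pos
  rcases (abs_eq zero_le_one).1 hζ with h | h
  · subst h
    have e1 : Tendsto (fun n : ℕ => Real.sqrt n * (μ n - θ n)) atTop (nhds r) := by
      simpa using hr
    have e2 : Tendsto (fun n : ℕ => Real.sqrt n * (-(μ n) - θ n)) atTop atBot := by
      refine (e1.add_atBot (tendsto_neg_atTop_atBot.comp h2)).congr fun n => ?_
      simp only [Function.comp]
      ring
    simpa using ((hc.tendsto r).comp e1).sub (hbot.comp e2)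
  · subst h
    have e2 : Tendsto (fun n : ℕ => Real.sqrt n * (-(μ n) - θ n)) atTop (nhds (-r)) := by
      refine hr.neg.congr fun n => ?_
      ring
    have e1 : Tendsto (fun n : ℕ => Real.sqrt n * (μ n - θ n)) atTop atTop := by
      refine (e2.add_atTop h2).congr fun n => ?_
      ring
    rw [← Phi_neg r]
    exact (htop.comp e1).sub ((hc.tendsto (-r)).comp e2)
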